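/- arXiv:1205.2779 — 2 statements merged into one kernel-verified Lean document; each statement's English description precedes it below -/
import Mathlib

section
/- For every n ≥ 3, the derivation algebra of the naturally graded filiform Leibniz algebra NGF₁ has dimension n + 1, i.e. dim Der(NGF₁) = n + 1. -/
open scoped BigOperators

/-- The bilinear multiplication on `Fin n → ℂ` determined by structure constants
`c i j k` = coefficient of the basis vector `e k` in the product `[e i, e j]`
of basis vectors (all indices zero-based). -/
noncomputable def structMul (n : ℕ) (c : Fin n → Fin n → Fin n → ℂ) :
    (Fin n → ℂ) →ₗ[ℂ] (Fin n → ℂ) →ₗ[ℂ] (Fin n → ℂ) :=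
  LinearMap.mk₂ ℂ (fun x y k => ∑ i, ∑ j, x i * y j * c i j k)
    (by
      intro x x' y; funext k
      simp [add_mul, Finset.sum_add_distrib])
    (by
      intro a x y; funext k
      simp [Finset.mul_sum, mul_assoc])
    (by
      intro x y y'; funext k
      simp [mul_add, add_mul, Finset.sum_add_distrib])
    (by
      intro a x y; funext k
      simp only [Pi.smul_apply, smul_eq_mul, Finset.mul_sum]
      congr 1; funext i; congr 1; funext j; ring)

/-- The space of derivations of the algebra `(Fin n → ℂ, μ)`:
linear endomorphisms `d` with `d [x,y] = [d x, y] + [x, d y]`. -/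
noncomputable def derivations (n : ℕ)
    (μ : (Fin n → ℂ) →ₗ[ℂ] (Fin n → ℂ) →ₗ[ℂ] (Fin n → ℂ)) :
    Submodule ℂ (Module.End ℂ (Fin n → ℂ)) where
  carrier := {d | ∀ x y, d (μ x y) = μ (d x) y + μ x (d y)}
  add_mem' := by
    intro a b ha hb x y
    simp only [LinearMap.add_apply, ha x y, hb x y, map_add]
    abel
  zero_mem' := by intro x y; simp
  smul_mem' := by
    intro t a ha x y
    simp only [LinearMap.smul_apply, ha x y, map_smul, smul_add]

/-- Structure constants of `NGF₁`: `[e₁,e₁] = e₃`, `[eᵢ,e₁] = e_{i+1}` for `2 ≤ i ≤ n-1`. -/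
noncomputable def cNGF1 (n : ℕ) : Fin n → Fin n → Fin n → ℂ := fun i j k =>
  if j.val = 0 ∧ i.val = 0 ∧ k.val = 2 then 1
  else if j.val = 0 ∧ 1 ≤ i.val ∧ i.val ≤ n - 2 ∧ k.val = i.val + 1 then 1
  else 0

/-!
In NGF₁ every product is `[x, y] = y₁ • R x`, where `R` is right multiplication by `e₁`. Hence a
linear map `d` is a derivation iff, for some scalar `a`, it multiplies the first coordinate by `a`
and satisfies `[d, R] = a R`. Since `e₁` and `e₂` generate the algebra, `d` is determined by `d e₁`
and `d e₂`. The vector `d e₁` is arbitrary: the grading sends `e₁` to `e₁`, the collapse of `e₁`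
onto `e₂` sends it to `e₂`, and the powers of `R` send it to `e₃, …, eₙ`. If `d e₁ = 0`, then `d`
commutes with `R`, so `R (d e₂) = d e₃ = R (d e₁) = 0`, and `d e₂` is a multiple of `eₙ`. Thus
`d ↦ (d e₁, (d e₂)ₙ)` is a linear isomorphism.
-/

section Derivations

variable {K V : Type*} [CommRing K] [AddCommGroup V] [Module K V]

/-- The derivations of the algebra `V` with multiplication `μ`; over `Fin n → ℂ` this is
`derivations n μ`. -/
def derivationSubmodule (μ : V →ₗ[K] V →ₗ[K] V) : Submodule K (Module.End K V) where
  carrier := {d | ∀ x y, d (μ x y) = μ (d x) y + μ x (d y)}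
  add_mem' ha hb x y := by
    simp only [LinearMap.add_apply, ha x y, hb x y, map_add]
    abel
  zero_mem' x y := by simp
  smul_mem' t a ha x y := by
    simp only [LinearMap.smul_apply, ha x y, map_smul, smul_add]

variable {φ : Module.Dual K V} {R d : Module.End K V}

theorem mem_derivationSubmodule_smulRight_iff {e : V} (he : φ e = 1)
    (hR : Function.Injective fun a : K => a • R) :
    d ∈ derivationSubmodule (LinearMap.smulRightₗ φ ∘ₗ R) ↔
      ∃ a : K, φ ∘ₗ d = a • φ ∧ ⁅d, R⁆ = a • R := by
  have mem_iff : d ∈ derivationSubmodule (LinearMap.smulRightₗ φ ∘ₗ R) ↔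
      ∀ x y, φ y • d (R x) = φ y • R (d x) + φ (d y) • R x := by
    simp [derivationSubmodule]
  rw [mem_iff]
  constructor
  · intro hd
    have lie_eq (x : V) : d (R x) = R (d x) + φ (d e) • R x := by simpa [he] using hd x e
    refine ⟨φ (d e), LinearMap.ext fun y => hR ?_, ?_⟩
    · ext x
      have := hd x y
      rw [lie_eq, smul_add, add_right_inj] at this
      simpa [smul_smul, mul_comm] using this.symm
    · ext x
      simp [Ring.lie_def, lie_eq]
  · rintro ⟨a, hφ, hlie⟩ x y
    have hφy : φ (d y) = a * φ y := LinearMap.congr_fun hφ y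
    have hdR : d (R x) - R (d x) = a • R x := LinearMap.congr_fun hlie x
    rw [sub_eq_iff_eq_add'.1 hdR, hφy]
    module

theorem commute_smulRight {v : V} (hφ : φ ∘ₗ R = 0) (hv : R v = 0) :
    Commute (φ.smulRight v : Module.End K V) R := by
  ext x
  have hφx : φ (R x) = 0 := LinearMap.congr_fun hφ x
  simp [hφx, hv]

end Derivations

namespace NGF1

variable (K : Type*) [CommRing K] (m : ℕ)

/-- Right multiplication by `e₁` in the algebra NGF₁ of dimension `m + 3` over `K`. In the
zero-based indexing of `Fin (m + 3)` it maps `e 0` to `e 2`, each other `e i` to `e (i + 1)`, and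
the last basis vector to `0`. -/
def rightMul : Module.End K (Fin (m + 3) → K) where
  toFun x := Fin.cons 0 (Fin.cons 0 fun k : Fin (m + 1) =>
    x k.castSucc.succ + if k = 0 then x 0 else 0)
  map_add' x y := by
    ext k
    refine Fin.cases (by simp) (Fin.cases (by simp) fun k => ?_) k
    simp only [Fin.cons_succ, Pi.add_apply]
    split_ifs <;> ring
  map_smul' a x := by
    ext k
    refine Fin.cases (by simp) (Fin.cases (by simp) fun k => ?_) k
    simp [mul_add]

/-- The multiplication `[x, y] = y₁ • [x, e₁]` of NGF₁ over `K`, in dimension `m + 3`. -/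
def mul : (Fin (m + 3) → K) →ₗ[K] (Fin (m + 3) → K) →ₗ[K] (Fin (m + 3) → K) :=
  LinearMap.smulRightₗ (LinearMap.proj 0) ∘ₗ rightMul K m

variable {K m}

@[simp]
theorem rightMul_apply_zero (x : Fin (m + 3) → K) : rightMul K m x 0 = 0 := rfl

@[simp]
theorem rightMul_apply_one (x : Fin (m + 3) → K) : rightMul K m x 1 = 0 := rfl

@[simp]
theorem rightMul_apply_succ_succ (x : Fin (m + 3) → K) (k : Fin (m + 1)) :
    rightMul K m x k.succ.succ = x k.castSucc.succ + if k = 0 then x 0 else 0 := rfl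

theorem rightMul_eq_iff {x y : Fin (m + 3) → K} : rightMul K m x = y ↔
    y 0 = 0 ∧ y 1 = 0 ∧
      ∀ k : Fin (m + 1), y k.succ.succ = x k.castSucc.succ + if k = 0 then x 0 else 0 := by
  rw [eq_comm, funext_iff, Fin.forall_fin_succ, Fin.forall_fin_succ]
  rfl

theorem rightMul_single_zero : rightMul K m (Pi.single 0 1) = Pi.single 2 1 := by
  change _ = Pi.single (Fin.succ (Fin.succ 0)) 1
  refine rightMul_eq_iff.2 ⟨Pi.single_eq_of_ne (Fin.succ_ne_zero _).symm 1,
    Pi.single_eq_of_ne (Fin.succ_succ_ne_one _).symm 1, fun k => ?_⟩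
  simp only [Pi.single_apply, Fin.succ_inj, Fin.succ_ne_zero, if_true, if_false, zero_add]

theorem rightMul_single_castSucc_succ (i : Fin (m + 1)) :
    rightMul K m (Pi.single i.castSucc.succ 1) = Pi.single i.succ.succ 1 := by
  refine rightMul_eq_iff.2 ⟨Pi.single_eq_of_ne (Fin.succ_ne_zero _).symm 1,
    Pi.single_eq_of_ne (Fin.succ_succ_ne_one _).symm 1, fun k => ?_⟩
  simp [Pi.single_apply, -Fin.castSucc_succ]

theorem rightMul_single_last : rightMul K m (Pi.single (Fin.last _) 1) = 0 :=
  rightMul_eq_iff.2 ⟨rfl, rfl, fun k => by simp⟩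

theorem rightMul_pow_single_zero (j : Fin (m + 1)) :
    (rightMul K m ^ (j.val + 1)) (Pi.single 0 1) = Pi.single j.succ.succ 1 := by
  induction j using Fin.induction with
  | zero => simpa using rightMul_single_zero
  | succ j ih =>
    rw [Fin.val_succ, pow_succ', Module.End.mul_apply]
    exact (congrArg _ ih).trans (rightMul_single_castSucc_succ j.succ)

theorem smul_rightMul_injective : Function.Injective fun a : K => a • rightMul K m := by
  intro a b hab
  have := congrFun (LinearMap.congr_fun hab (Pi.single 0 1)) 2
  simpa [rightMul_single_zero] using this

theorem eq_single_last_of_rightMul_eq_zero {x : Fin (m + 3) → K} (hx : rightMul K m x = 0)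
    (hx0 : x 0 = 0) : x = Pi.single (Fin.last _) (x (Fin.last _)) := by
  ext k
  induction k using Fin.lastCases with
  | last => simp
  | cast k =>
    have hk : x k.castSucc = 0 := by
      induction k using Fin.cases with
      | zero => exact hx0
      | succ k => simpa [hx0] using congrFun hx k.succ.succ
    rw [hk, Pi.single_eq_of_ne (Fin.castSucc_lt_last k).ne]

theorem ext_of_commute_rightMul {f g : Module.End K (Fin (m + 3) → K)}
    (hf : Commute f (rightMul K m)) (hg : Commute g (rightMul K m))
    (h0 : f (Pi.single 0 1) = g (Pi.single 0 1)) (h1 : f (Pi.single 1 1) = g (Pi.single 1 1)) :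
    f = g := by
  have hsucc (i : Fin (m + 2)) : f (Pi.single i.succ 1) = g (Pi.single i.succ 1) := by
    induction i using Fin.induction with
    | zero => exact h1
    | succ i ih =>
      rw [← rightMul_single_castSucc_succ, ← Module.End.mul_apply, ← Module.End.mul_apply,
        hf.eq, hg.eq, Module.End.mul_apply, Module.End.mul_apply, ih]
  exact LinearMap.pi_ext' fun i => LinearMap.ext_ring (Fin.cases h0 hsucc i)

theorem mem_derivationSubmodule_iff {d : Module.End K (Fin (m + 3) → K)} :
    d ∈ derivationSubmodule (mul K m) ↔
      ∃ a : K, LinearMap.proj 0 ∘ₗ d = a • LinearMap.proj 0 ∧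
        ⁅d, rightMul K m⁆ = a • rightMul K m :=
  mem_derivationSubmodule_smulRight_iff (e := Pi.single 0 1) (by simp) smul_rightMul_injective

theorem mem_derivationSubmodule_of_commute {d : Module.End K (Fin (m + 3) → K)}
    (hd0 : LinearMap.proj 0 ∘ₗ d = 0) (hd : Commute d (rightMul K m)) :
    d ∈ derivationSubmodule (mul K m) :=
  mem_derivationSubmodule_iff.2 ⟨0, by simp [hd0], by simp [commute_iff_lie_eq.1 hd]⟩

theorem proj_comp_eq_zero_and_commute_of_mem_derivationSubmodule
    {d : Module.End K (Fin (m + 3) → K)} (hd : d ∈ derivationSubmodule (mul K m))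
    (h : d (Pi.single 0 1) 0 = 0) :
    LinearMap.proj 0 ∘ₗ d = 0 ∧ Commute d (rightMul K m) := by
  obtain ⟨a, hφ, hlie⟩ := mem_derivationSubmodule_iff.1 hd
  obtain rfl : a = 0 := by simpa [h] using (LinearMap.congr_fun hφ (Pi.single 0 1)).symm
  exact ⟨by simpa using hφ, commute_iff_lie_eq.2 (by simpa using hlie)⟩

variable (K m)

/-- The derivation attached to the grading of NGF₁ in which `e₁` and `e₂` have degree `1` and `eₖ`
has degree `k - 1` for `k ≥ 2`. -/
def grading : Module.End K (Fin (m + 3) → K) :=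
  LinearMap.mulLeft K fun k => ((max 1 k.val : ℕ) : K)

/-- The derivation mapping `e₁` to `e₂` and fixing the other basis vectors. -/
def collapse : Module.End K (Fin (m + 3) → K) :=
  1 + (LinearMap.proj 0).smulRight (Pi.single 1 1 - Pi.single 0 1)

/-- The derivation mapping `e₂` to `eₙ` and the other basis vectors to `0`. -/
def topDerivation : Module.End K (Fin (m + 3) → K) :=
  (LinearMap.proj 1).smulRight (Pi.single (Fin.last _) 1)

variable {K m}

theorem lie_grading_rightMul : ⁅grading K m, rightMul K m⁆ = rightMul K m := by
  rw [Ring.lie_def, sub_eq_iff_eq_add]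
  refine LinearMap.ext fun x => ?_
  suffices rightMul K m (x + grading K m x) = grading K m (rightMul K m x) by
    rw [Module.End.mul_apply, ← this, map_add]; rfl
  refine rightMul_eq_iff.2 ⟨by simp [grading], by simp [grading], fun k => ?_⟩
  have degree_source : max 1 k.castSucc.succ.val = k + 1 := by simp
  have degree_target : max 1 k.succ.succ.val = k + 2 := by simp
  simp only [grading, LinearMap.mulLeft_apply, Pi.mul_apply, Pi.add_apply,
    rightMul_apply_succ_succ, degree_source, degree_target]
  split_ifs with hk
  · simp [hk]; ring
  · push_cast; ring

theorem grading_mem_derivationSubmodule : grading K m ∈ derivationSubmodule (mul K m) :=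
  mem_derivationSubmodule_iff.2
    ⟨1, LinearMap.ext fun x => by simp [grading], by rw [lie_grading_rightMul, one_smul]⟩

theorem collapse_mem_derivationSubmodule : collapse K m ∈ derivationSubmodule (mul K m) := by
  have rightMul_sub : rightMul K m (Pi.single 1 1 - Pi.single 0 1) = 0 := by
    rw [map_sub, rightMul_single_zero, sub_eq_zero]
    exact rightMul_single_castSucc_succ 0
  refine mem_derivationSubmodule_of_commute (LinearMap.ext fun x => by simp [collapse]) ?_
  exact (Commute.one_left _).add_left (commute_smulRight (LinearMap.ext fun _ => rfl) rightMul_sub)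

theorem commute_topDerivation_rightMul : Commute (topDerivation K m) (rightMul K m) :=
  commute_smulRight (LinearMap.ext fun _ => rfl) rightMul_single_last

theorem topDerivation_mem_derivationSubmodule :
    topDerivation K m ∈ derivationSubmodule (mul K m) :=
  mem_derivationSubmodule_of_commute (LinearMap.ext fun x => by simp [topDerivation])
    commute_topDerivation_rightMul

theorem rightMul_pow_succ_mem_derivationSubmodule (j : ℕ) :
    rightMul K m ^ (j + 1) ∈ derivationSubmodule (mul K m) :=
  mem_derivationSubmodule_of_commute (LinearMap.ext fun _ => by simp [pow_succ'])
    (Commute.pow_self _ _)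

theorem exists_mem_derivationSubmodule_apply_eq_single (k : Fin (m + 3)) :
    ∃ d ∈ derivationSubmodule (mul K m), d (Pi.single 0 1) = Pi.single k 1 := by
  refine Fin.cases ?_ (Fin.cases ?_ fun j => ?_) k
  · refine ⟨_, grading_mem_derivationSubmodule, ?_⟩
    ext i
    simp +contextual [grading, Pi.single_apply]
  · exact ⟨_, collapse_mem_derivationSubmodule, by simp [collapse]⟩
  · exact ⟨_, rightMul_pow_succ_mem_derivationSubmodule j, rightMul_pow_single_zero j⟩

theorem exists_mem_derivationSubmodule_apply_eq (u : Fin (m + 3) → K) :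
    ∃ d ∈ derivationSubmodule (mul K m), d (Pi.single 0 1) = u := by
  choose d hd hde using exists_mem_derivationSubmodule_apply_eq_single (K := K) (m := m)
  refine ⟨∑ k, u k • d k, sum_mem fun k _ => Submodule.smul_mem _ _ (hd k), ?_⟩
  simpa [hde] using (pi_eq_sum_univ' u).symm

theorem eq_smul_topDerivation_of_apply_single_zero_eq_zero {d : Module.End K (Fin (m + 3) → K)}
    (hd : d ∈ derivationSubmodule (mul K m)) (h : d (Pi.single 0 1) = 0) :
    d = d (Pi.single 1 1) (Fin.last _) • topDerivation K m := by
  obtain ⟨hd0, hcomm⟩ :=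
    proj_comp_eq_zero_and_commute_of_mem_derivationSubmodule hd (congrFun h 0)
  have comm_apply (x) : d (rightMul K m x) = rightMul K m (d x) := LinearMap.congr_fun hcomm x
  have rightMul_d_one : rightMul K m (d (Pi.single 1 1)) = 0 := calc
    _ = d (rightMul K m (Pi.single 1 1)) := (comm_apply _).symm
    _ = d (rightMul K m (Pi.single 0 1)) :=
      congrArg d ((rightMul_single_castSucc_succ 0).trans rightMul_single_zero.symm)
    _ = rightMul K m (d (Pi.single 0 1)) := comm_apply _
    _ = 0 := by rw [h, map_zero]
  have d_one := eq_single_last_of_rightMul_eq_zero rightMul_d_one (LinearMap.congr_fun hd0 _)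
  refine ext_of_commute_rightMul hcomm (commute_topDerivation_rightMul.smul_left _) ?_ ?_
  · simp [h, topDerivation]
  · rw [d_one]
    simp [topDerivation, ← Pi.single_smul]

variable (K m)

/-- The coordinates `d ↦ (d e₁, (d e₂)ₙ)` on the derivations of NGF₁. -/
def derivationCoords : derivationSubmodule (mul K m) →ₗ[K] (Fin (m + 3) → K) × K :=
  (LinearMap.prod (LinearMap.applyₗ (Pi.single 0 1))
    (LinearMap.proj (Fin.last _) ∘ₗ LinearMap.applyₗ (Pi.single 1 1))) ∘ₗ Submodule.subtype _

theorem derivationCoords_injective : Function.Injective (derivationCoords K m) := by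
  refine (injective_iff_map_eq_zero _).2 fun ⟨d, hd⟩ hcoords => Subtype.ext ?_
  obtain ⟨h0, h1⟩ : d (Pi.single 0 1) = 0 ∧ d (Pi.single 1 1) (Fin.last _) = 0 :=
    Prod.ext_iff.1 hcoords
  simpa [h1] using eq_smul_topDerivation_of_apply_single_zero_eq_zero hd h0

theorem derivationCoords_surjective : Function.Surjective (derivationCoords K m) := by
  rintro ⟨u, b⟩
  obtain ⟨d, hd, hdu⟩ := exists_mem_derivationSubmodule_apply_eq u
  let c := b - d (Pi.single 1 1) (Fin.last _)
  refine ⟨⟨d + c • topDerivation K m, add_mem hd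
    (Submodule.smul_mem _ _ topDerivation_mem_derivationSubmodule)⟩, Prod.ext ?_ ?_⟩
  · simp [derivationCoords, topDerivation, hdu]
  · simp [derivationCoords, topDerivation, c]

end NGF1

theorem structMul_single_single {n : ℕ} (c : Fin n → Fin n → Fin n → ℂ) (i j : Fin n) :
    structMul n c (Pi.single i 1) (Pi.single j 1) = c i j := by
  ext k
  simp [structMul, Pi.single_apply]

theorem cNGF1_of_ne_zero {n : ℕ} {i j : Fin n} (hj : j.val ≠ 0) : cNGF1 n i j = 0 := by
  ext k
  simp [cNGF1, hj]

theorem cNGF1_zero_right (m : ℕ) (i : Fin (m + 3)) :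
    cNGF1 (m + 3) i 0 = NGF1.rightMul ℂ m (Pi.single i 1) := by
  refine (NGF1.rightMul_eq_iff.2 ⟨by simp [cNGF1], ?_, fun k => ?_⟩).symm
  · simp only [cNGF1, Fin.val_zero, Fin.val_one]
    split_ifs <;> first | omega | rfl
  · have := k.isLt
    simp only [cNGF1, Pi.single_apply, Fin.ext_iff, Fin.val_succ, Fin.val_castSucc, Fin.val_zero,
      true_and]
    split_ifs <;> first | omega | simp

theorem structMul_cNGF1 (m : ℕ) : structMul (m + 3) (cNGF1 (m + 3)) = NGF1.mul ℂ m := by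
  suffices ∀ i j : Fin (m + 3),
      cNGF1 (m + 3) i j = NGF1.mul ℂ m (Pi.single i 1) (Pi.single j 1) from
    LinearMap.pi_ext' fun i => LinearMap.ext_ring <| LinearMap.pi_ext' fun j =>
      LinearMap.ext_ring <| (structMul_single_single _ i j).trans (this i j)
  intro i j
  by_cases hj : j = 0
  · simp [hj, cNGF1_zero_right, NGF1.mul]
  · rw [cNGF1_of_ne_zero (Fin.val_ne_zero_iff.2 hj)]
    simp [NGF1.mul, Ne.symm hj]

theorem dim_der_NGF1_general (K : Type*) [CommRing K] [Nontrivial K] (m : ℕ) :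
    Module.finrank K (derivationSubmodule (NGF1.mul K m)) = m + 4 := by
  rw [(LinearEquiv.ofBijective _ ⟨NGF1.derivationCoords_injective K m,
    NGF1.derivationCoords_surjective K m⟩).finrank_eq]
  simp

theorem dim_der_NGF1 (n : ℕ) (hn : 3 ≤ n) :
    Module.finrank ℂ (derivations n (structMul n (cNGF1 n))) = n + 1 := by
  obtain ⟨m, rfl⟩ := Nat.exists_eq_add_of_le' hn
  exact structMul_cNGF1 m ▸ dim_der_NGF1_general ℂ m
end

section
/- For every n ≥ 5 and every choice of parameters α₄, …, αₙ, θ ∈ ℂ, the algebra L = L(α₄,…,αₙ,θ) of the first class FLbₙ satisfies n − 1 ≤ dim Der(L) ≤ n + 1. -/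
open scoped BigOperators

/-- Structure constants of `L(α₄,…,αₙ,θ) ∈ FLbₙ`:
`[e₁,e₁] = e₃`; `[eᵢ,e₁] = e_{i+1}` for `2 ≤ i ≤ n-1`;
`[e₁,e₂] = α₄e₄ + ⋯ + α_{n-1}e_{n-1} + θeₙ`;
`[eⱼ,e₂] = α₄e_{j+2} + ⋯ + α_{n+2-j}eₙ` for `2 ≤ j ≤ n-2`. -/
noncomputable def cFLb (n : ℕ) (α : ℕ → ℂ) (θ : ℂ) : Fin n → Fin n → Fin n → ℂ :=
  fun i j k =>
  if j.val = 0 then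
    (if i.val = 0 ∧ k.val = 2 then 1
     else if 1 ≤ i.val ∧ i.val ≤ n - 2 ∧ k.val = i.val + 1 then 1
     else 0)
  else if j.val = 1 then
    (if i.val = 0 then
       (if 3 ≤ k.val ∧ k.val ≤ n - 2 then α (k.val + 1)
        else if k.val = n - 1 then θ
        else 0)
     else if 1 ≤ i.val ∧ i.val ≤ n - 3 ∧ i.val + 2 ≤ k.val then α (k.val - i.val + 2)
     else 0)
  else 0

/-!
Let `S` be right multiplication by `e₁`, and let `E` send `e₁` to `eₙ` and kill the other basis
vectors. Then `SE = ES = 0`, and right multiplication by `e₂` is a polynomial in `S` plus a multiple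
of `E`. So `E` and the positive powers of `S` commute with all right multiplications; as their
images lie in `⟨e₃, …, eₙ⟩`, which multiplies to zero from the right, they are derivations, and
`S, …, Sⁿ⁻², E` are linearly independent.

Conversely, a derivation `d` with `d(e₁) = 0` commutes with `S`, hence kills `e₃, …, eₙ` and maps
`e₂` into `ker S = ⟨e₁ - e₂, eₙ⟩`. The `e₃`-coefficient of `d[e₁,e₂] = [e₁,d(e₂)]` shows that
`d(e₂)` is a multiple of `eₙ`, so a derivation is determined by `d(e₁)` and the `eₙ`-coefficient
of `d(e₂)`.
-/

section Derivations

variable {n : ℕ} {μ : (Fin n → ℂ) →ₗ[ℂ] (Fin n → ℂ) →ₗ[ℂ] (Fin n → ℂ)}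
  {d : Module.End ℂ (Fin n → ℂ)}

lemma mem_derivations_of_commute_flip (hcomm : ∀ y, Commute d (μ.flip y))
    (hann : ∀ y, μ.flip (d y) = 0) : d ∈ derivations n μ := by
  intro x y
  have hcomm_x : d (μ x y) = μ (d x) y := LinearMap.congr_fun (hcomm y) x
  have hann_x : μ x (d y) = 0 := LinearMap.congr_fun (hann y) x
  rw [hcomm_x, hann_x, add_zero]

lemma commute_flip_of_mem_derivations (hd : d ∈ derivations n μ) {y : Fin n → ℂ} (hy : d y = 0) :
    Commute d (μ.flip y) :=
  LinearMap.ext fun x => by simp [hd x y, hy]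

end Derivations

namespace FLb

/-- The basis vector `e_{j+1}` of the paper, and zero when `j ≥ n`. Indexing by `ℕ` makes shift
formulas such as `shift_basisVec` hold without range conditions. -/
def basisVec (n j : ℕ) : Fin n → ℂ := fun k => if k.val = j then 1 else 0

/-- Right multiplication by `e₁`: it maps both `e₁` and `e₂` to `e₃`, and `eᵢ` to `e_{i+1}` for
`2 ≤ i < n`. -/
noncomputable def shift (n : ℕ) : Module.End ℂ (Fin n → ℂ) :=
  Fintype.linearCombination ℂ fun i : Fin n => basisVec n (max i.val 1 + 1)

/-- The map `e₁ ↦ eₙ` killing the other basis vectors: the part of right multiplication by `e₂`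
that is not a polynomial in `shift n`. -/
noncomputable def firstToLast (n : ℕ) : Module.End ℂ (Fin n → ℂ) :=
  Fintype.linearCombination ℂ fun i : Fin n => if i.val = 0 then basisVec n (n - 1) else 0

section BasisVec

variable {n : ℕ}

lemma basisVec_apply (j : ℕ) (k : Fin n) : basisVec n j k = if k.val = j then 1 else 0 := rfl

lemma basisVec_val (i : Fin n) : basisVec n i.val = Pi.single i 1 := by
  ext k
  simp [basisVec_apply, Pi.single_apply, Fin.ext_iff]

lemma basisVec_of_le {j : ℕ} (hj : n ≤ j) : basisVec n j = 0 := by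
  ext k
  exact if_neg (by omega)

lemma linearMap_ext_basisVec {M : Type*} [AddCommMonoid M] [Module ℂ M]
    {f g : (Fin n → ℂ) →ₗ[ℂ] M} (h : ∀ j < n, f (basisVec n j) = g (basisVec n j)) : f = g :=
  (Pi.basisFun ℂ (Fin n)).ext fun i => by
    simpa only [Pi.basisFun_apply, basisVec_val] using h i i.isLt

lemma linearCombination_basisVec {M : Type*} [AddCommMonoid M] [Module ℂ M] (v : Fin n → M)
    {j : ℕ} (hj : j < n) : Fintype.linearCombination ℂ v (basisVec n j) = v ⟨j, hj⟩ := by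
  rw [basisVec_val ⟨j, hj⟩, Fintype.linearCombination_apply_single, one_smul]

lemma linearIndependent_basisVec_add_two :
    LinearIndependent ℂ fun m : Fin (n - 2) => basisVec n (m + 2) := by
  have hinj : Function.Injective fun m : Fin (n - 2) => (⟨m + 2, by omega⟩ : Fin n) :=
    fun a b hab => by simpa [Fin.ext_iff] using hab
  convert (Pi.basisFun ℂ (Fin n)).linearIndependent.comp _ hinj using 2 with m
  rw [Function.comp_apply, Pi.basisFun_apply, ← basisVec_val]

lemma sum_smul_basisVec_apply (a : ℕ → ℂ) {j N : ℕ} (hN : n ≤ j + N) (k : Fin n) :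
    (∑ m ∈ Finset.range N, a m • basisVec n (j + m)) k = if j ≤ k.val then a (k - j) else 0 := by
  rw [Finset.sum_apply]
  split_ifs with hjk
  · rw [Finset.sum_eq_single_of_mem (k.val - j) (Finset.mem_range.2 (by omega))]
    · simp [basisVec_apply, hjk]
    · intro m _ hm
      rw [Pi.smul_apply, basisVec_apply, if_neg (by omega), smul_zero]
  · refine Finset.sum_eq_zero fun m _ => ?_
    rw [Pi.smul_apply, basisVec_apply, if_neg (by omega), smul_zero]

lemma structMul_basisVec (c : Fin n → Fin n → Fin n → ℂ) (i j : Fin n) :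
    structMul n c (basisVec n i) (basisVec n j) = c i j := by
  ext k
  simp [structMul, basisVec_val, Pi.single_apply]

end BasisVec

section Shift

variable {n : ℕ}

lemma shift_basisVec (j : ℕ) : shift n (basisVec n j) = basisVec n (max j 1 + 1) := by
  rcases lt_or_ge j n with hj | hj
  · exact linearCombination_basisVec _ hj
  · rw [basisVec_of_le hj, map_zero, basisVec_of_le (by omega)]

lemma shift_pow_succ_basisVec (m j : ℕ) :
    (shift n ^ (m + 1)) (basisVec n j) = basisVec n (max j 1 + (m + 1)) := by
  induction m with
  | zero => rw [zero_add, pow_one, shift_basisVec]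
  | succ m ih =>
    rw [pow_succ', Module.End.mul_apply, ih, shift_basisVec]
    congr 1
    omega

lemma firstToLast_basisVec (j : ℕ) :
    firstToLast n (basisVec n j) = if j = 0 then basisVec n (n - 1) else 0 := by
  rcases lt_or_ge j n with hj | hj
  · exact linearCombination_basisVec _ hj
  · rw [basisVec_of_le hj, map_zero]
    split_ifs
    · rw [basisVec_of_le (by omega)]
    · rfl

lemma shift_mul_firstToLast : shift n * firstToLast n = 0 :=
  linearMap_ext_basisVec fun j _ => by
    rw [Module.End.mul_apply, firstToLast_basisVec, apply_ite (shift n), shift_basisVec,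
      basisVec_of_le (by omega), map_zero, ite_self, LinearMap.zero_apply]

lemma firstToLast_mul_shift : firstToLast n * shift n = 0 :=
  linearMap_ext_basisVec fun j _ => by
    rw [Module.End.mul_apply, shift_basisVec, firstToLast_basisVec, if_neg (by omega),
      LinearMap.zero_apply]

lemma commute_shift_firstToLast : Commute (shift n) (firstToLast n) :=
  shift_mul_firstToLast.trans firstToLast_mul_shift.symm

lemma shift_apply_two (x : Fin n → ℂ) (hn : 2 < n) :
    shift n x ⟨2, hn⟩ = x ⟨0, by omega⟩ + x ⟨1, by omega⟩ := by
  have hne : (⟨0, by omega⟩ : Fin n) ≠ ⟨1, by omega⟩ := by simp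
  rw [shift, Fintype.linearCombination_apply, Finset.sum_apply, Fintype.sum_eq_add _ _ hne]
  · simp [basisVec_apply]
  · rintro ⟨i, hi⟩ ⟨h0, h1⟩
    simp only [ne_eq, Fin.mk.injEq] at h0 h1
    rw [Pi.smul_apply, basisVec_apply, if_neg (by simp only; omega), smul_zero]

lemma shift_apply_succ (x : Fin n → ℂ) {k : ℕ} (hk : 2 ≤ k) (hkn : k + 1 < n) :
    shift n x ⟨k + 1, hkn⟩ = x ⟨k, by omega⟩ := by
  rw [shift, Fintype.linearCombination_apply, Finset.sum_apply,
    Fintype.sum_eq_single ⟨k, by omega⟩]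
  · simp [basisVec_apply, show 1 ≤ k by omega]
  · rintro ⟨i, hi⟩ hik
    simp only [ne_eq, Fin.mk.injEq] at hik
    rw [Pi.smul_apply, basisVec_apply, if_neg (by simp only; omega), smul_zero]

lemma eq_smul_add_smul_of_shift_eq_zero (hn : 3 ≤ n) {x : Fin n → ℂ} (hx : shift n x = 0) :
    x = x ⟨0, by omega⟩ • (basisVec n 0 - basisVec n 1) +
      x ⟨n - 1, by omega⟩ • basisVec n (n - 1) := by
  have h01 : x ⟨0, by omega⟩ + x ⟨1, by omega⟩ = 0 := by rw [← shift_apply_two x hn, hx]; rfl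
  have hmid (k : ℕ) (hk : 2 ≤ k) (hkn : k + 1 < n) : x ⟨k, by omega⟩ = 0 := by
    rw [← shift_apply_succ x hk hkn, hx]; rfl
  ext ⟨k, hk⟩
  obtain rfl | rfl | hk2 : k = 0 ∨ k = 1 ∨ 2 ≤ k := by omega
  · simp [basisVec_apply, show 0 ≠ n - 1 by omega]
  · simp [basisVec_apply, show 1 ≠ n - 1 by omega, eq_neg_of_add_eq_zero_right h01]
  · obtain rfl | hkn : k = n - 1 ∨ k + 1 < n := by omega
    · simp [basisVec_apply, show n - 1 ≠ 0 by omega, show n - 1 ≠ 1 by omega]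
    · simp [basisVec_apply, hmid k hk2 hkn, show k ≠ 0 by omega, show k ≠ 1 by omega,
        show k ≠ n - 1 by omega]

lemma apply_basisVec_eq_zero_of_commute_shift {d : Module.End ℂ (Fin n → ℂ)}
    (hcomm : Commute d (shift n)) (h0 : d (basisVec n 0) = 0) {j : ℕ} (hj : 2 ≤ j) :
    d (basisVec n j) = 0 := by
  obtain ⟨m, rfl⟩ := Nat.exists_eq_add_of_le' hj
  have hpow : basisVec n (m + 2) = (shift n ^ (m + 1)) (basisVec n 0) := by
    rw [shift_pow_succ_basisVec]
    congr 1
    omega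
  rw [hpow, ← Module.End.mul_apply, (hcomm.pow_right _).eq, Module.End.mul_apply, h0, map_zero]

lemma linearIndependent_firstToLast_shift_pow (hn : n ≠ 0) :
    LinearIndependent ℂ
      (Fin.cons (firstToLast n) fun m : Fin (n - 2) => shift n ^ (m.val + 1) :
        Fin (n - 2 + 1) → Module.End ℂ (Fin n → ℂ)) := by
  refine linearIndependent_finCons.2 ⟨?_, fun hmem => ?_⟩
  · refine LinearIndependent.of_comp (LinearMap.applyₗ (basisVec n 1)) ?_
    have heval : LinearMap.applyₗ (basisVec n 1) ∘ (fun m : Fin (n - 2) => shift n ^ (m.val + 1)) =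
        fun m : Fin (n - 2) => basisVec n (m + 2) := by
      ext1 m
      rw [Function.comp_apply, LinearMap.applyₗ_apply_apply, shift_pow_succ_basisVec]
      congr 1
      omega
    rw [heval]
    exact linearIndependent_basisVec_add_two
  · -- Positive powers of `shift n` agree on `e₁` and `e₂`, while `firstToLast n` does not.
    have hspan : Submodule.span ℂ (Set.range fun m : Fin (n - 2) => shift n ^ (m.val + 1)) ≤
        LinearMap.ker (LinearMap.applyₗ (basisVec n 0 - basisVec n 1)) := by
      rw [Submodule.span_le]
      rintro _ ⟨m, rfl⟩
      simp [shift_pow_succ_basisVec]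
    have hlast : basisVec n (n - 1) = 0 := by
      simpa [firstToLast_basisVec] using hspan hmem
    simpa [basisVec_apply] using congrFun hlast ⟨n - 1, by omega⟩

end Shift

section RightMultiplication

variable {n : ℕ} (α : ℕ → ℂ) (θ : ℂ)

lemma flip_structMul_basisVec_zero (hn : 0 < n) :
    (structMul n (cFLb n α θ)).flip (basisVec n 0) = shift n :=
  linearMap_ext_basisVec fun i hi => by
    ext k
    rw [LinearMap.flip_apply, structMul_basisVec _ ⟨i, hi⟩ ⟨0, hn⟩, shift_basisVec, basisVec_apply]
    simp only [cFLb]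
    split_ifs <;> first | rfl | omega

lemma flip_structMul_basisVec_of_two_le {j : ℕ} (hj : 2 ≤ j) :
    (structMul n (cFLb n α θ)).flip (basisVec n j) = 0 := by
  rcases lt_or_ge j n with hjn | hjn
  · refine linearMap_ext_basisVec fun i hi => ?_
    ext k
    rw [LinearMap.flip_apply, structMul_basisVec _ ⟨i, hi⟩ ⟨j, hjn⟩, cFLb, if_neg, if_neg] <;>
      simp only [LinearMap.zero_apply, Pi.zero_apply] <;> omega
  · rw [basisVec_of_le hjn, map_zero]

lemma flip_structMul_basisVec_one (hn : 4 ≤ n) :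
    (structMul n (cFLb n α θ)).flip (basisVec n 1) =
      ∑ m ∈ Finset.range (n - 3), α (m + 4) • shift n ^ (m + 2) + (θ - α n) • firstToLast n := by
  refine linearMap_ext_basisVec fun i hi => ?_
  ext k
  have hpow (m : ℕ) : (shift n ^ (m + 2)) (basisVec n i) = basisVec n (max i 1 + 2 + m) := by
    rw [shift_pow_succ_basisVec]
    congr 1
    omega
  have hsum := sum_smul_basisVec_apply (fun m => α (m + 4))
    (show n ≤ max i 1 + 2 + (n - 3) by omega) k
  simp only [LinearMap.flip_apply, structMul_basisVec _ ⟨i, hi⟩ ⟨1, show 1 < n by omega⟩,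
    LinearMap.add_apply, LinearMap.sum_apply, LinearMap.smul_apply, hpow, Pi.add_apply, hsum,
    firstToLast_basisVec, Pi.smul_apply, smul_eq_mul]
  have hk := k.isLt
  obtain rfl | hi0 : i = 0 ∨ 1 ≤ i := by omega
  · obtain hlt | hmid | hlast : k.val < 3 ∨ (3 ≤ k.val ∧ k.val ≤ n - 2) ∨ k.val = n - 1 := by omega
    · have hne : k.val ≠ n - 1 := by omega
      simp [cFLb, basisVec_apply, hne, hlt.not_ge]
    · have hne : k.val ≠ n - 1 := by omega
      have hα : k.val - 3 + 4 = k.val + 1 := by omega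
      simp [cFLb, basisVec_apply, hne, hmid, hα]
    · have hα : n - 1 - 3 + 4 = n := by omega
      simp [cFLb, basisVec_apply, hlast, hα, show ¬n - 1 ≤ n - 2 by omega,
        show 3 ≤ n - 1 by omega]
  · have hα (h : i + 2 ≤ k.val) : k.val - (i + 2) + 4 = k.val - i + 2 := by omega
    simp only [cFLb, max_eq_left hi0, show i ≠ 0 by omega, if_false, Pi.zero_apply, mul_zero,
      add_zero, one_ne_zero, if_true]
    split_ifs <;> first | omega | rfl | rw [hα (by omega)]

lemma structMul_basisVec_zero_one (hn : 4 ≤ n) :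
    structMul n (cFLb n α θ) (basisVec n 0) (basisVec n 1) =
      ∑ m ∈ Finset.range (n - 3), α (m + 4) • basisVec n (3 + m) +
        (θ - α n) • basisVec n (n - 1) := by
  have hpow (m : ℕ) : (shift n ^ (m + 2)) (basisVec n 0) = basisVec n (3 + m) := by
    rw [shift_pow_succ_basisVec]
    congr 1
    omega
  rw [← LinearMap.flip_apply, flip_structMul_basisVec_one α θ hn]
  simp only [LinearMap.add_apply, LinearMap.sum_apply, LinearMap.smul_apply, hpow,
    firstToLast_basisVec, if_true]

lemma commute_flip_structMul (hn : 4 ≤ n) {d : Module.End ℂ (Fin n → ℂ)}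
    (hshift : Commute d (shift n)) (hlast : Commute d (firstToLast n)) (y : Fin n → ℂ) :
    Commute d ((structMul n (cFLb n α θ)).flip y) := by
  suffices hbasis : ∀ j < n, Commute d ((structMul n (cFLb n α θ)).flip (basisVec n j)) by
    rw [← (Pi.basisFun ℂ (Fin n)).sum_repr y, map_sum]
    refine Commute.sum_right _ _ _ fun i _ => ?_
    rw [map_smul, Pi.basisFun_apply, ← basisVec_val]
    exact (hbasis i i.isLt).smul_right _
  intro j _
  obtain rfl | rfl | hj : j = 0 ∨ j = 1 ∨ 2 ≤ j := by omega
  · rwa [flip_structMul_basisVec_zero α θ (by omega)]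
  · rw [flip_structMul_basisVec_one α θ hn]
    refine (Commute.sum_right _ _ _ fun m _ => ?_).add_right (hlast.smul_right _)
    exact (hshift.pow_right _).smul_right _
  · rw [flip_structMul_basisVec_of_two_le α θ hj]
    exact Commute.zero_right d

lemma mem_derivations_of_commute_shift (hn : 4 ≤ n) {d : Module.End ℂ (Fin n → ℂ)}
    (hshift : Commute d (shift n)) (hlast : Commute d (firstToLast n))
    (hann : ∀ j, (structMul n (cFLb n α θ)).flip (d (basisVec n j)) = 0) :
    d ∈ derivations n (structMul n (cFLb n α θ)) := by
  refine mem_derivations_of_commute_flip (commute_flip_structMul α θ hn hshift hlast) fun y => ?_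
  have hcomp : (structMul n (cFLb n α θ)).flip ∘ₗ d = 0 :=
    linearMap_ext_basisVec fun j _ => hann j
  exact LinearMap.congr_fun hcomp y

lemma shift_pow_succ_mem_derivations (hn : 4 ≤ n) (m : ℕ) :
    shift n ^ (m + 1) ∈ derivations n (structMul n (cFLb n α θ)) :=
  mem_derivations_of_commute_shift α θ hn (Commute.pow_self _ _)
    (commute_shift_firstToLast.pow_left _) fun j => by
      rw [shift_pow_succ_basisVec, flip_structMul_basisVec_of_two_le α θ (by omega)]

lemma firstToLast_mem_derivations (hn : 4 ≤ n) :
    firstToLast n ∈ derivations n (structMul n (cFLb n α θ)) :=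
  mem_derivations_of_commute_shift α θ hn commute_shift_firstToLast.symm (Commute.refl _)
    fun j => by
      rw [firstToLast_basisVec]
      split_ifs
      · exact flip_structMul_basisVec_of_two_le α θ (by omega)
      · exact map_zero _

lemma le_finrank_derivations (hn : 4 ≤ n) :
    n - 1 ≤ Module.finrank ℂ (derivations n (structMul n (cFLb n α θ))) := by
  have hspan := finrank_span_eq_card (linearIndependent_firstToLast_shift_pow (n := n) (by omega))
  have hle : Submodule.span ℂ (Set.range (Fin.cons (firstToLast n)
      fun m : Fin (n - 2) => shift n ^ (m.val + 1))) ≤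
        derivations n (structMul n (cFLb n α θ)) := by
    rw [Submodule.span_le, Fin.range_cons, Set.insert_subset_iff, Set.range_subset_iff]
    exact ⟨firstToLast_mem_derivations α θ hn, fun m => shift_pow_succ_mem_derivations α θ hn m⟩
  calc n - 1 = n - 2 + 1 := by omega
    _ = _ := by rw [hspan, Fintype.card_fin]
    _ ≤ _ := Submodule.finrank_mono hle

section KilledBasisVec

variable {α θ} {d : Module.End ℂ (Fin n → ℂ)}

lemma commute_shift_of_mem_derivations (hn : 0 < n)
    (hd : d ∈ derivations n (structMul n (cFLb n α θ))) (h0 : d (basisVec n 0) = 0) :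
    Commute d (shift n) := by
  rw [← flip_structMul_basisVec_zero α θ hn]
  exact commute_flip_of_mem_derivations hd h0

lemma apply_structMul_basisVec_zero_one_eq_zero (hn : 4 ≤ n)
    (hshift : Commute d (shift n)) (h0 : d (basisVec n 0) = 0) :
    d (structMul n (cFLb n α θ) (basisVec n 0) (basisVec n 1)) = 0 := by
  have hge {j : ℕ} (hj : 2 ≤ j) : d (basisVec n j) = 0 :=
    apply_basisVec_eq_zero_of_commute_shift hshift h0 hj
  rw [structMul_basisVec_zero_one α θ hn, map_add, map_smul, hge (by omega), smul_zero, add_zero,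
    map_sum]
  exact Finset.sum_eq_zero fun m _ => by rw [map_smul, hge (by omega), smul_zero]

lemma eq_zero_of_apply_basisVec_one_eq_smul (hn : 4 ≤ n)
    (hd : d ∈ derivations n (structMul n (cFLb n α θ))) (h0 : d (basisVec n 0) = 0) {b : ℂ}
    (hb : d (basisVec n 1) = b • (basisVec n 0 - basisVec n 1)) : b = 0 := by
  have hsquare : structMul n (cFLb n α θ) (basisVec n 0) (basisVec n 0) = basisVec n 2 := by
    rw [← LinearMap.flip_apply, flip_structMul_basisVec_zero α θ (by omega), shift_basisVec]
    rfl
  have hleibniz : b • (basisVec n 2 -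
      structMul n (cFLb n α θ) (basisVec n 0) (basisVec n 1)) = 0 := by
    rw [← apply_structMul_basisVec_zero_one_eq_zero (α := α) (θ := θ) hn
      (commute_shift_of_mem_derivations (by omega) hd h0) h0, hd, h0, hb, map_zero,
      LinearMap.zero_apply, zero_add, map_smul, map_sub, hsquare]
  have hcoeff : structMul n (cFLb n α θ) (basisVec n 0) (basisVec n 1) ⟨2, by omega⟩ = 0 := by
    rw [structMul_basisVec _ ⟨0, by omega⟩ ⟨1, by omega⟩]
    simp [cFLb, show 2 ≠ n - 1 by omega]
  simpa [hcoeff, basisVec_apply] using congrFun hleibniz ⟨2, by omega⟩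

lemma eq_zero_of_mem_derivations (hn : 4 ≤ n)
    (hd : d ∈ derivations n (structMul n (cFLb n α θ))) (h0 : d (basisVec n 0) = 0)
    (h1 : d (basisVec n 1) ⟨n - 1, by omega⟩ = 0) : d = 0 := by
  have hshift : Commute d (shift n) := commute_shift_of_mem_derivations (by omega) hd h0
  have hge {j : ℕ} (hj : 2 ≤ j) : d (basisVec n j) = 0 :=
    apply_basisVec_eq_zero_of_commute_shift hshift h0 hj
  have hker : shift n (d (basisVec n 1)) = 0 := by
    rw [← Module.End.mul_apply, ← hshift.eq, Module.End.mul_apply, shift_basisVec]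
    exact hge le_rfl
  have hone : d (basisVec n 1) =
      d (basisVec n 1) ⟨0, by omega⟩ • (basisVec n 0 - basisVec n 1) := by
    simpa only [h1, zero_smul, add_zero] using
      eq_smul_add_smul_of_shift_eq_zero (by omega) hker
  refine linearMap_ext_basisVec fun j _ => ?_
  obtain rfl | rfl | hj : j = 0 ∨ j = 1 ∨ 2 ≤ j := by omega
  · exact h0
  · rw [hone, eq_zero_of_apply_basisVec_one_eq_smul hn hd h0 hone, zero_smul, LinearMap.zero_apply]
  · exact hge hj

end KilledBasisVec

lemma finrank_derivations_le (hn : 4 ≤ n) :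
    Module.finrank ℂ (derivations n (structMul n (cFLb n α θ))) ≤ n + 1 := by
  let coords : Module.End ℂ (Fin n → ℂ) →ₗ[ℂ] (Fin n → ℂ) × ℂ :=
    (LinearMap.applyₗ (basisVec n 0)).prod
      (LinearMap.proj ⟨n - 1, by omega⟩ ∘ₗ LinearMap.applyₗ (basisVec n 1))
  have hinj : Function.Injective
      (coords ∘ₗ (derivations n (structMul n (cFLb n α θ))).subtype) := by
    rw [injective_iff_map_eq_zero]
    rintro ⟨d, hd⟩ hzero
    obtain ⟨h0, h1⟩ := Prod.mk.inj hzero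
    exact Subtype.ext (eq_zero_of_mem_derivations hn hd h0 h1)
  simpa only [Module.finrank_prod, Module.finrank_fin_fun, Module.finrank_self] using
    LinearMap.finrank_le_finrank_of_injective hinj

end RightMultiplication

end FLb

theorem dim_der_FLb_bounds_general (n : ℕ) (hn : 4 ≤ n) (α : ℕ → ℂ) (θ : ℂ) :
    n - 1 ≤ Module.finrank ℂ (derivations n (structMul n (cFLb n α θ))) ∧
      Module.finrank ℂ (derivations n (structMul n (cFLb n α θ))) ≤ n + 1 :=
  ⟨FLb.le_finrank_derivations α θ hn, FLb.finrank_derivations_le α θ hn⟩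

theorem dim_der_FLb_bounds (n : ℕ) (hn : 5 ≤ n) (α : ℕ → ℂ) (θ : ℂ) :
    n - 1 ≤ Module.finrank ℂ (derivations n (structMul n (cFLb n α θ))) ∧
      Module.finrank ℂ (derivations n (structMul n (cFLb n α θ))) ≤ n + 1 := by
  exact dim_der_FLb_bounds_general n (by omega) α θ
end
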